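/- Let G_1,…,G_k (with k > 1) be connected finite simple graphs, each having at least one edge, and let G be any coalescence of G_1,…,G_k, i.e., a connected graph obtained from their disjoint union by repeatedly identifying a single vertex of one component with a single vertex of another. Let f : ℝ → ℝ with f(0) = 0. Then f[−] preserves positivity on P_G(ℝ) if and only if: (1) f[−] preserves positivity on each P_{G_i}(ℝ), and (2) f is continuous and super-additive on [0,∞), i.e., f(x+y) ≥ f(x) + f(y) for all x, y ≥ 0. In particular, for any α ∈ ℝ, the power function ψ_α (respectively φ_α) preserves positivity on P_G(ℝ) if and only if it does so on P_{G_i}(ℝ) for all 1 ≤ i ≤ k and α ≥ 1; equivalently, H_G^ψ = [1,∞) ∩ ⋂_{i=1}^k H_{G_i}^ψ and H_G^φ = [1,∞) ∩ ⋂_{i=1}^k H_{G_i}^φ. -/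

import Mathlib

open Set Matrix

noncomputable section

/-- Entrywise power function `x ↦ x^α` on nonnegative reals, with the convention `0^α := 0`. -/
def powEnt (α x : ℝ) : ℝ := if x = 0 then 0 else x ^ α

/-- The odd extension `ψ_α(x) = sgn(x)|x|^α` of the power function, with `ψ_α(0) = 0`. -/
def psiF (α x : ℝ) : ℝ := Real.sign x * |x| ^ α

/-- The even extension `φ_α(x) = |x|^α` of the power function, with `φ_α(0) = 0`. -/
def phiF (α x : ℝ) : ℝ := if x = 0 then 0 else |x| ^ α

/-- `P_G(I)`: positive semidefinite matrices with entries in `I` and zeros outside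
the edge pattern of `G`. -/
def PsetG {V : Type*} [Fintype V] (G : SimpleGraph V) (I : Set ℝ) :
    Set (Matrix V V ℝ) :=
  {A | A.PosSemidef ∧ (∀ i j, A i j ∈ I) ∧ ∀ i j, i ≠ j → ¬ G.Adj i j → A i j = 0}

/-- `H_G`: the set of entrywise powers preserving `P_G([0,∞))`. -/
def HsetG {V : Type*} [Fintype V] (G : SimpleGraph V) : Set ℝ :=
  {α | ∀ A ∈ PsetG G (Ici (0 : ℝ)), A.map (powEnt α) ∈ PsetG G univ}

/-- `H_G^ψ`: the set of powers `α` such that `ψ_α` preserves `P_G(ℝ)`. -/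
def HsetPsi {V : Type*} [Fintype V] (G : SimpleGraph V) : Set ℝ :=
  {α | ∀ A ∈ PsetG G univ, A.map (psiF α) ∈ PsetG G univ}

/-- `H_G^φ`: the set of powers `α` such that `φ_α` preserves `P_G(ℝ)`. -/
def HsetPhi {V : Type*} [Fintype V] (G : SimpleGraph V) : Set ℝ :=
  {α | ∀ A ∈ PsetG G univ, A.map (phiF α) ∈ PsetG G univ}

/-- The set of which the critical exponent is the least element:
all `α` such that every `β ≥ α` lies in `H`. -/
def CEset (H : Set ℝ) : Set ℝ := {α | ∀ β, α ≤ β → β ∈ H}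

/-- The positive integers, as a set of reals. -/
def posNats : Set ℝ := {x | ∃ k : ℕ, 0 < k ∧ x = k}

/-- The odd positive integers `−1+2ℕ`, as a set of reals. -/
def oddNats : Set ℝ := {x | ∃ k : ℕ, 0 < k ∧ x = 2 * k - 1}

/-- The even positive integers `2ℕ`, as a set of reals. -/
def evenNats : Set ℝ := {x | ∃ k : ℕ, 0 < k ∧ x = 2 * k}


namespace Matrix

/-- A real matrix is positive semidefinite iff it is symmetric with nonnegative quadratic form. -/
lemma posSemidef_real_iff {V : Type*} [Fintype V] {A : Matrix V V ℝ} :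
    A.PosSemidef ↔ (∀ i j, A i j = A j i) ∧ ∀ x : V → ℝ, 0 ≤ ∑ i, ∑ j, x i * A i j * x j := by
  rw [posSemidef_iff_dotProduct_mulVec]
  have hq : ∀ x : V → ℝ, star x ⬝ᵥ (A *ᵥ x) = ∑ i, ∑ j, x i * A i j * x j := fun x => by
    simp [dotProduct, mulVec, Finset.mul_sum, mul_assoc]
  simp only [hq]
  refine and_congr_left fun _ => ⟨fun h i j => ?_, fun h => ?_⟩
  · simpa using (h.apply i j).symm
  · ext i j
    simpa using h j i

/-- A matrix supported on the range of an injection is positive semidefinite as soon as its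
restriction to that range is. -/
lemma PosSemidef.of_submatrix_of_support {W V : Type*} [Fintype W] [Fintype V]
    {A : Matrix V V ℝ} (e : W ↪ V) (hA : (A.submatrix e e).PosSemidef)
    (hsupp : ∀ i j, A i j ≠ 0 → i ∈ range e ∧ j ∈ range e) : A.PosSemidef := by
  rw [posSemidef_real_iff] at hA ⊢
  constructor
  · intro i j
    by_cases h : i ∈ range e ∧ j ∈ range e
    · obtain ⟨⟨w, rfl⟩, w', rfl⟩ := h
      exact hA.1 w w'
    · rw [not_imp_comm.1 (hsupp i j) h,
        not_imp_comm.1 (hsupp j i) fun h' => h h'.symm]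
  · intro x
    convert hA.2 (x ∘ e) using 1
    symm
    have inner : ∀ i, ∑ w', x i * A i (e w') * x (e w') = ∑ j, x i * A i j * x j := fun i => by
      refine Fintype.sum_of_injective e e.injective _ _ (fun j hj => ?_) fun _ => rfl
      rw [not_imp_comm.1 (hsupp i j) fun h => hj h.2]
      simp
    refine Fintype.sum_of_injective e e.injective _ _ (fun i hi => ?_) fun w => ?_
    · refine Finset.sum_eq_zero fun j _ => ?_
      rw [not_imp_comm.1 (hsupp i j) fun h => hi h.1]
      simp
    · exact inner (e w)

/-- Extension of a matrix by zero along an injection. -/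
lemma exists_extension_by_zero {W V : Type*} (e : W ↪ V) (M : Matrix W W ℝ) :
    ∃ A : Matrix V V ℝ, A.submatrix e e = M ∧
      ∀ i j, A i j ≠ 0 → i ∈ range e ∧ j ∈ range e := by
  classical
  refine ⟨of fun i j => Function.extend e (fun w => Function.extend e (M w) 0 j) 0 i, ?_, ?_⟩
  · ext w w'
    simp [e.injective.extend_apply]
  · intro i j h
    by_cases hi : i ∈ range e
    · refine ⟨hi, ?_⟩
      obtain ⟨w, rfl⟩ := hi
      by_contra hj
      rw [of_apply, e.injective.extend_apply, Function.extend_apply' _ _ _ hj] at h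
      exact h rfl
    · rw [of_apply, Function.extend_apply' _ _ _ hi] at h
      exact absurd rfl h

/-- Splitting a positive semidefinite matrix at a cut vertex `v`: if the only vertex of `X`
interacting with the complement of `X` is `v`, then the part of `A` on `X` and the rest are
both positive semidefinite after moving a suitable amount of the diagonal entry at `v`. -/
lemma PosSemidef.exists_split_at_cut_vertex {V : Type*} [Fintype V] [DecidableEq V]
    {A : Matrix V V ℝ} (hA : A.PosSemidef) (X : Finset V) {v : V} (hv : v ∈ X)
    (hcut : ∀ i j, i ∈ X → i ≠ v → j ∉ X → A i j = 0) :
    ∃ B : Matrix V V ℝ, B.PosSemidef ∧ (A - B).PosSemidef ∧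
      (∀ i j, B i j ≠ 0 → i ∈ X ∧ j ∈ X) ∧
      ∀ i j, ¬(i = v ∧ j = v) → i ∈ X → j ∈ X → B i j = A i j := by
  rw [posSemidef_real_iff] at hA
  obtain ⟨hsymm, hpos⟩ := hA
  set E : Matrix V V ℝ := of fun i j => if i ∈ X ∧ j ∈ X then A i j else 0 with hE
  set Q : (V → ℝ) → ℝ := fun x => ∑ i, ∑ j, x i * E i j * x j with hQ
  have hcut' : ∀ i j, j ∈ X → j ≠ v → i ∉ X → A i j = 0 := fun i j hj hjv hi => by
    rw [hsymm]; exact hcut j i hj hjv hi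
  have hglue : ∀ x z : V → ℝ, x v = z v →
      0 ≤ Q x + ∑ i, ∑ j, z i * (A i j - E i j) * z j := by
    intro x z hxz
    refine (hpos fun i => if i ∈ X then x i else z i).trans_eq ?_
    rw [hQ]
    simp only [← Finset.sum_add_distrib]
    refine Finset.sum_congr rfl fun i _ => Finset.sum_congr rfl fun j _ => ?_
    by_cases hi : i ∈ X <;> by_cases hj : j ∈ X
    · simp [hE, hi, hj]
    · by_cases hiv : i = v
      · subst hiv
        simp [hE, hi, hj, hxz]
      · simp [hE, hi, hj, hcut i j hi hiv hj]
    · by_cases hjv : j = v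
      · subst hjv
        simp [hE, hi, hj, hxz]
      · simp [hE, hi, hj, hcut' i j hj hjv hi]
    · simp [hE, hi, hj]
  have hQ0 : ∀ x, 0 ≤ Q x := fun x => by
    refine (hpos fun i => if i ∈ X then x i else 0).trans_eq ?_
    refine Finset.sum_congr rfl fun i _ => Finset.sum_congr rfl fun j _ => ?_
    by_cases hi : i ∈ X <;> by_cases hj : j ∈ X <;> simp [hE, hi, hj]
  have hscale : ∀ (F : Matrix V V ℝ) (t : ℝ) (x : V → ℝ),
      ∑ i, ∑ j, (t * x i) * F i j * (t * x j) = t ^ 2 * ∑ i, ∑ j, x i * F i j * x j := by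
    intro F t x
    simp only [Finset.mul_sum]
    exact Finset.sum_congr rfl fun i _ => Finset.sum_congr rfl fun j _ => by ring
  set S : Set ℝ := Q '' {x | x v = 1} with hS
  have hSne : S.Nonempty := ⟨_, fun _ => 1, rfl, rfl⟩
  have hSbdd : BddBelow S := ⟨0, by rintro _ ⟨x, -, rfl⟩; exact hQ0 x⟩
  set c := sInf S with hc
  have hcQ : ∀ x, c * x v ^ 2 ≤ Q x := by
    intro x
    by_cases hx : x v = 0
    · simpa [hx] using hQ0 x
    · have h1 : c ≤ Q fun i => (x v)⁻¹ * x i := csInf_le hSbdd ⟨_, by simp [hx], rfl⟩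
      have h2 : Q (fun i => (x v)⁻¹ * x i) = ((x v)⁻¹) ^ 2 * Q x := hscale E _ x
      rw [h2] at h1
      have h3 := mul_le_mul_of_nonneg_right h1 (sq_nonneg (x v))
      calc c * x v ^ 2 ≤ _ := h3
        _ = Q x := by field_simp
  have hcrest : ∀ z : V → ℝ, 0 ≤ c * z v ^ 2 + ∑ i, ∑ j, z i * (A i j - E i j) * z j := by
    intro z
    by_cases hz : z v = 0
    · have := hglue 0 z (by simp [hz])
      simpa [hz, hQ] using this
    · have h1 : -∑ i, ∑ j, ((z v)⁻¹ * z i) * (A i j - E i j) * ((z v)⁻¹ * z j) ≤ c := by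
        refine le_csInf hSne ?_
        rintro _ ⟨x, hx, rfl⟩
        have := hglue x (fun i => (z v)⁻¹ * z i) (by simpa [hz] using hx)
        linarith
      have h2 := hscale (A - E) (z v)⁻¹ z
      simp only [sub_apply] at h2
      rw [h2] at h1
      have h3 := mul_le_mul_of_nonneg_right h1 (sq_nonneg (z v))
      have h4 : -((z v)⁻¹ ^ 2 * ∑ i, ∑ j, z i * (A i j - E i j) * z j) * z v ^ 2 =
          -∑ i, ∑ j, z i * (A i j - E i j) * z j := by field_simp
      linarith
  have hcorner : ∀ x : V → ℝ,
      ∑ i, ∑ j, x i * (if i = v ∧ j = v then c else 0) * x j = c * x v ^ 2 := by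
    intro x
    rw [Finset.sum_eq_single v (fun i _ hi => by simp [hi]) (by simp),
      Finset.sum_eq_single v (fun i _ hi => by simp [hi]) (by simp)]
    simp only [and_self, if_true]
    ring
  refine ⟨of fun i j => E i j - if i = v ∧ j = v then c else 0, ?_, ?_, ?_, ?_⟩
  · rw [posSemidef_real_iff]
    refine ⟨fun i j => ?_, fun x => ?_⟩
    · simp only [of_apply, hE, hsymm i j, and_comm]
    · have := hcQ x
      simp only [of_apply, mul_sub, sub_mul, Finset.sum_sub_distrib, hcorner]
      linarith
  · rw [posSemidef_real_iff]
    refine ⟨fun i j => ?_, fun x => ?_⟩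
    · simp only [sub_apply, of_apply, hE, hsymm i j, and_comm]
    · refine (hcrest x).trans_eq ?_
      rw [← hcorner]
      simp only [← Finset.sum_add_distrib, sub_apply, of_apply]
      exact Finset.sum_congr rfl fun i _ => Finset.sum_congr rfl fun j _ => by ring
  · intro i j h
    by_contra hij
    have : ¬(i = v ∧ j = v) := by rintro ⟨rfl, rfl⟩; exact hij ⟨hv, hv⟩
    simp [hE, hij, this] at h
  · intro i j hij hi hj
    simp [hE, hij, hi, hj]

end Matrix

/-- In a connected graph covered by blocks, any proper nonempty family of blocks meets a block
outside the family. -/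
lemma SimpleGraph.Connected.exists_block_inter_nonempty {V κ : Type*} [DecidableEq V]
    [Fintype κ] {G : SimpleGraph V} (hG : G.Connected) (X : κ → Finset V)
    (hX : ∀ m, (X m).Nonempty)
    (hadj : ∀ u v, G.Adj u v → ∃ m, u ∈ X m ∧ v ∈ X m) {S : Finset κ} (hS : S.Nonempty)
    (hSuniv : S ≠ Finset.univ) : ∃ j ∉ S, (X j ∩ S.biUnion X).Nonempty := by
  by_contra! hcon
  have hdisj : ∀ j ∉ S, ∀ v ∈ X j, v ∉ S.biUnion X := fun j hj v hv hvU => by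
    have := hcon j hj
    exact absurd (Finset.mem_inter.2 ⟨hv, hvU⟩) (by simp [this])
  obtain ⟨i, hi⟩ := hS
  obtain ⟨j, hj⟩ : ∃ j, j ∉ S := by
    by_contra! h
    exact hSuniv (Finset.eq_univ_iff_forall.2 h)
  obtain ⟨u, hu⟩ := hX i
  obtain ⟨w, hw⟩ := hX j
  obtain ⟨p⟩ := hG.preconnected u w
  obtain ⟨d, -, hd1, hd2⟩ := p.exists_boundary_dart (S.biUnion X : Finset V)
    (Finset.mem_coe.2 (Finset.mem_biUnion.2 ⟨i, hi, hu⟩))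
    (fun h => hdisj j hj w hw (Finset.mem_coe.1 h))
  obtain ⟨m, hm1, hm2⟩ := hadj _ _ d.adj
  by_cases hm : m ∈ S
  · exact hd2 (Finset.mem_coe.2 (Finset.mem_biUnion.2 ⟨m, hm, hm2⟩))
  · exact hdisj m hm _ hm1 (Finset.mem_coe.1 hd1)

/-- The decomposition property of a family of blocks: every positive semidefinite matrix
supported on the blocks is a sum of positive semidefinite matrices, one on each block. -/
def DecomposesOver {V κ : Type*} (X : κ → Finset V) (S : Finset κ) : Prop :=
  ∀ A : Matrix V V ℝ, A.PosSemidef →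
    (∀ i j, A i j ≠ 0 → ∃ m ∈ S, i ∈ X m ∧ j ∈ X m) →
    ∃ B : κ → Matrix V V ℝ, (∀ m ∈ S, (B m).PosSemidef) ∧
      (∀ m ∈ S, ∀ i j, B m i j ≠ 0 → i ∈ X m ∧ j ∈ X m) ∧ A = ∑ m ∈ S, B m

/-- Gluing a further block along a single vertex keeps the decomposition property. -/
lemma DecomposesOver.insert_of_inter_eq_singleton {V κ : Type*} [Fintype V] [DecidableEq V]
    [DecidableEq κ] {X : κ → Finset V} {S : Finset κ} (hS : DecomposesOver X S) {j : κ}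
    (hj : j ∉ S) {v : V} (hv : X j ∩ S.biUnion X = {v}) : DecomposesOver X (insert j S) := by
  intro A hA hsupp
  have hmem : v ∈ X j ∩ S.biUnion X := by simp [hv]
  obtain ⟨hvX, hvU⟩ := Finset.mem_inter.1 hmem
  obtain ⟨B, hB, hC, hBX, hBA⟩ := hA.exists_split_at_cut_vertex (X j) hvX <| by
    intro a b ha hav hb
    by_contra hab
    obtain ⟨m, hm, hma, hmb⟩ := hsupp a b hab
    have hmj : m ≠ j := by rintro rfl; exact hb hmb
    have hmS : m ∈ S := Finset.mem_of_mem_insert_of_ne hm hmj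
    have : a ∈ X j ∩ S.biUnion X :=
      Finset.mem_inter.2 ⟨ha, Finset.mem_biUnion.2 ⟨m, hmS, hma⟩⟩
    rw [hv, Finset.mem_singleton] at this
    exact hav this
  obtain ⟨Bs, hBs, hBsX, hsum⟩ := hS (A - B) hC <| by
    intro a b hab
    by_cases hvv : a = v ∧ b = v
    · obtain ⟨rfl, rfl⟩ := hvv
      obtain ⟨m, hm, hvm⟩ := Finset.mem_biUnion.1 hvU
      exact ⟨m, hm, hvm, hvm⟩
    by_cases hX : a ∈ X j ∧ b ∈ X j
    · rw [Matrix.sub_apply, hBA a b hvv hX.1 hX.2, sub_self] at hab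
      exact absurd rfl hab
    · rw [Matrix.sub_apply, not_imp_comm.1 (hBX a b) hX, sub_zero] at hab
      obtain ⟨m, hm, hma, hmb⟩ := hsupp a b hab
      have hmj : m ≠ j := by rintro rfl; exact hX ⟨hma, hmb⟩
      exact ⟨m, Finset.mem_of_mem_insert_of_ne hm hmj, hma, hmb⟩
  have hne : ∀ m ∈ S, m ≠ j := fun m hm hmj => hj (hmj ▸ hm)
  refine ⟨Function.update Bs j B, fun m hm => ?_, fun m hm => ?_, ?_⟩
  · rcases Finset.mem_insert.1 hm with rfl | hm
    · simpa using hB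
    · simpa [hne m hm] using hBs m hm
  · rcases Finset.mem_insert.1 hm with rfl | hm
    · simpa using hBX
    · simpa [hne m hm] using hBsX m hm
  · rw [Finset.sum_insert hj, Function.update_self,
      Finset.sum_congr rfl fun m hm => Function.update_of_ne (hne m hm) B Bs, ← hsum]
    abel

/-- Blocks glued in a tree-like fashion have the decomposition property. -/
lemma decomposesOver_univ_of_card_eq {V κ : Type*} [Fintype V] [DecidableEq V]
    [Fintype κ] [DecidableEq κ] [Nonempty κ] {G : SimpleGraph V} (hG : G.Connected)
    (X : κ → Finset V) (hX : ∀ m, (X m).Nonempty) (hcover : ∀ v, ∃ m, v ∈ X m)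
    (hadj : ∀ u v, G.Adj u v → ∃ m, u ∈ X m ∧ v ∈ X m)
    (hcard : Fintype.card V + Fintype.card κ = ∑ m, (X m).card + 1) :
    DecomposesOver X Finset.univ := by
  have hnext := fun S : Finset κ =>
    hG.exists_block_inter_nonempty X hX hadj (S := S)
  have hle : ∀ n, ∀ S : Finset κ, S.Nonempty → S.card + n = Fintype.card κ →
      ∑ m ∈ S, (X m).card + 1 ≤ (S.biUnion X).card + S.card := by
    intro n
    induction n with
    | zero =>
      intro S _ hn
      have hSu : S = Finset.univ := (Finset.card_eq_iff_eq_univ S).1 hn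
      have hU : S.biUnion X = Finset.univ := by
        rw [hSu]
        exact Finset.eq_univ_iff_forall.2 fun v => by simpa using hcover v
      rw [hU, hSu, Finset.card_univ, Finset.card_univ, hcard]
    | succ n ih =>
      intro S hS hn
      obtain ⟨j, hj, hne⟩ := hnext S hS fun h => by
        rw [h, Finset.card_univ] at hn
        omega
      have h1 := ih (insert j S) (Finset.insert_nonempty j S) (by
        rw [Finset.card_insert_of_notMem hj]; omega)
      rw [Finset.sum_insert hj, Finset.biUnion_insert, Finset.card_insert_of_notMem hj] at h1
      have h2 := Finset.card_union_add_card_inter (X j) (S.biUnion X)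
      have h3 := hne.card_pos
      omega
  have hchain : ∀ n, n + 1 ≤ Fintype.card κ → ∃ S : Finset κ, S.card = n + 1 ∧
      (S.biUnion X).card + S.card ≤ ∑ m ∈ S, (X m).card + 1 ∧ DecomposesOver X S := by
    intro n
    induction n with
    | zero =>
      intro _
      obtain ⟨m⟩ := ‹Nonempty κ›
      refine ⟨{m}, by simp, by simp, fun A hA hsupp => ⟨fun _ => A, by simp [hA], ?_, by simp⟩⟩
      intro m' hm' i j hij
      obtain rfl := Finset.mem_singleton.1 hm'
      simpa using hsupp i j hij
    | succ n ih =>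
      intro hn
      obtain ⟨S, hSn, hScard, hSdec⟩ := ih (by omega)
      have hS : S.Nonempty := Finset.card_pos.1 (by omega)
      obtain ⟨j, hj, hne⟩ := hnext S hS fun h => by
        rw [h, Finset.card_univ] at hSn
        omega
      have h1 := hle (Fintype.card κ - (n + 2)) (insert j S) (Finset.insert_nonempty j S) (by
        rw [Finset.card_insert_of_notMem hj]; omega)
      rw [Finset.sum_insert hj, Finset.biUnion_insert, Finset.card_insert_of_notMem hj] at h1
      have h2 := Finset.card_union_add_card_inter (X j) (S.biUnion X)
      have h3 := hne.card_pos
      obtain ⟨v, hv⟩ := Finset.card_eq_one.1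
        (show (X j ∩ S.biUnion X).card = 1 by omega)
      refine ⟨insert j S, ?_, ?_, hSdec.insert_of_inter_eq_singleton hj hv⟩
      · rw [Finset.card_insert_of_notMem hj, hSn]
      · rw [Finset.sum_insert hj, Finset.biUnion_insert, Finset.card_insert_of_notMem hj]
        omega
  have hpos : 0 < Fintype.card κ := Fintype.card_pos
  obtain ⟨S, hS, -, hdec⟩ := hchain (Fintype.card κ - 1) (by omega)
  rwa [(Finset.card_eq_iff_eq_univ S).1 (by omega)] at hdec

section EntrywisePreservers

/-- A preserver of `P_G` preserves positivity of every matrix whose pattern embeds into `G`. -/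
lemma posSemidef_map_of_pattern_embeds {W V : Type*} [Fintype W] [Fintype V]
    {G : SimpleGraph V} {f : ℝ → ℝ} (hf : ∀ M ∈ PsetG G univ, (M.map f).PosSemidef)
    (e : W ↪ V) {M : Matrix W W ℝ} (hM : M.PosSemidef)
    (hpat : ∀ x y, x ≠ y → M x y ≠ 0 → G.Adj (e x) (e y)) : (M.map f).PosSemidef := by
  obtain ⟨A, rfl, hsupp⟩ := exists_extension_by_zero e M
  refine (hf A ⟨hM.of_submatrix_of_support e hsupp, fun _ _ => mem_univ _, ?_⟩).submatrix e
  intro i j hij hadj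
  by_contra h
  obtain ⟨⟨x, rfl⟩, y, rfl⟩ := hsupp i j h
  exact hadj (hpat x y (fun hxy => hij (congrArg e hxy)) h)

/-- A preserver of `P_G` is nonnegative, superadditive and multiplicatively midconvex on
`[0, ∞)` as soon as `G` contains a path on three vertices. -/
lemma preserver_of_path_three {V : Type*} [Fintype V] {G : SimpleGraph V} {f : ℝ → ℝ}
    (hf0 : f 0 = 0) (hf : ∀ M ∈ PsetG G univ, (M.map f).PosSemidef) {a b c : V} (hac : a ≠ c)
    (hab : G.Adj a b) (hbc : G.Adj b c) :
    (∀ x, 0 ≤ x → 0 ≤ f x) ∧ (∀ x y, 0 ≤ x → 0 ≤ y → f x + f y ≤ f (x + y)) ∧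
      ∀ p q r, 0 ≤ p → 0 ≤ r → q ^ 2 = p * r → f q ^ 2 ≤ f p * f r := by
  have hinj : Function.Injective ![a, b, c] := by
    intro i j hij
    fin_cases i <;> fin_cases j <;>
      simp_all [hab.ne, hab.ne', hbc.ne, hbc.ne', hac.symm]
  have hpath : ∀ x p y q r : ℝ, (!![x, p, 0; p, y, q; 0, q, r]).PosSemidef →
      ((!![x, p, 0; p, y, q; 0, q, r]).map f).PosSemidef := by
    intro x p y q r hM
    refine posSemidef_map_of_pattern_embeds hf ⟨_, hinj⟩ hM fun i j hij hne => ?_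
    fin_cases i <;> fin_cases j <;> simp_all [hab.symm, hbc.symm]
  have hsuper : ∀ x y : ℝ, 0 ≤ x → 0 ≤ y →
      ((!![x, x, 0; x, x + y, y; 0, y, y]).map f).PosSemidef := by
    intro x y hx hy
    refine hpath _ _ _ _ _ (posSemidef_real_iff.2 ⟨fun i j => ?_, fun u => ?_⟩)
    · fin_cases i <;> fin_cases j <;> rfl
    · simp [Fin.sum_univ_three]
      nlinarith [mul_nonneg hx (sq_nonneg (u 0 + u 1)), mul_nonneg hy (sq_nonneg (u 1 + u 2))]
  refine ⟨fun x hx => ?_, fun x y hx hy => ?_, fun p q r hp hr hq => ?_⟩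
  · simpa using (hsuper x 0 hx le_rfl).diag_nonneg (i := 0)
  · have := (posSemidef_real_iff.1 (hsuper x y hx hy)).2 ![1, -1, 1]
    simp [Fin.sum_univ_three, hf0] at this
    linarith
  · have hM : (!![p, q, 0; q, r, 0; 0, 0, 0] : Matrix (Fin 3) (Fin 3) ℝ).PosSemidef := by
      refine posSemidef_real_iff.2 ⟨fun i j => ?_, fun u => ?_⟩
      · fin_cases i <;> fin_cases j <;> rfl
      · simp [Fin.sum_univ_three]
        rcases hp.eq_or_lt with rfl | hp
        · have : q = 0 := by simpa using hq
          subst this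
          nlinarith [mul_nonneg hr (sq_nonneg (u 1))]
        · have : 0 ≤ (p * u 0 + q * u 1) ^ 2 / p := by positivity
          have h2 : (p * u 0 + q * u 1) ^ 2 / p = p * u 0 ^ 2 + 2 * q * u 0 * u 1 + r * u 1 ^ 2 := by
            field_simp
            linear_combination (u 1) ^ 2 * hq
          nlinarith
    have hq := (posSemidef_real_iff.1 (hpath _ _ _ _ _ hM)).2
    have := discrim_le_zero (a := f p) (b := 2 * f q) (c := f r) fun s => by
      have := hq ![s, 1, 0]
      simp [Fin.sum_univ_three] at this
      linarith
    rw [discrim] at this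
    linarith

/-- Nonnegative, superadditive and multiplicatively midconvex functions on `[0, ∞)` are
continuous there. -/
lemma continuousOn_Ici_of_superadditive_of_mulMidconvex {f : ℝ → ℝ}
    (hnonneg : ∀ x, 0 ≤ x → 0 ≤ f x)
    (hsuper : ∀ x y, 0 ≤ x → 0 ≤ y → f x + f y ≤ f (x + y))
    (hmid : ∀ p q r, 0 ≤ p → 0 ≤ r → q ^ 2 = p * r → f q ^ 2 ≤ f p * f r) :
    ContinuousOn f (Ici 0) := by
  set g : ℝ → ℝ := fun x => f (max x 0) with hg
  have hgf : ∀ x, 0 ≤ x → g x = f x := fun x hx => by simp [hg, hx]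
  have hmono : Monotone g := by
    intro x y hxy
    have h1 : max x 0 ≤ max y 0 := max_le_max_right 0 hxy
    have h2 := hsuper (max x 0) (max y 0 - max x 0) (le_max_right _ _) (by linarith)
    have h3 := hnonneg (max y 0 - max x 0) (by linarith)
    rw [add_sub_cancel] at h2
    simp only [hg]
    linarith
  have hcont : ∀ x, 0 ≤ x → ContinuousAt g x := by
    intro x hx
    rw [hmono.continuousAt_iff_leftLim_eq_rightLim]
    have hLR : Function.leftLim g x ≤ Function.rightLim g x := hmono.leftLim_le_rightLim le_rfl
    have hL0 : 0 ≤ Function.leftLim g x :=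
      (hnonneg _ (le_max_right (x - 1) 0)).trans (hmono.le_leftLim (sub_one_lt x))
    have hlim := hmono.tendsto_rightLim x
    refine hLR.antisymm ?_
    rcases hx.eq_or_lt with rfl | hx
    · have h2 : 2 * Function.rightLim g 0 ≤ Function.rightLim g 0 := by
        refine ge_of_tendsto hlim (Filter.eventually_of_mem self_mem_nhdsWithin fun b hb => ?_)
        have hb : 0 < b := hb
        have h3 := hmono.rightLim_le (half_pos hb)
        have h4 := hsuper (b / 2) (b / 2) (by linarith) (by linarith)
        rw [add_halves] at h4
        rw [hgf _ (half_pos hb).le] at h3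
        rw [hgf _ hb.le]
        linarith
      linarith
    · have h2 : Function.rightLim g x ^ 2 ≤ Function.leftLim g x * Function.rightLim g x := by
        refine ge_of_tendsto (hlim.const_mul _)
          (Filter.eventually_of_mem self_mem_nhdsWithin fun b hb => ?_)
        have hb : x < b := hb
        have hb0 : 0 < b := hx.trans hb
        obtain ⟨a, ha1, ha2⟩ : ∃ a, x ^ 2 / b < a ∧ a < x := exists_between (by
          rw [div_lt_iff₀ hb0]
          nlinarith)
        have ha0 : 0 < a := lt_trans (by positivity) ha1
        have hab : x < √(a * b) := Real.lt_sqrt_of_sq_lt (by rwa [div_lt_iff₀ hb0] at ha1)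
        have h3 := hmono.rightLim_le hab
        have h4 := hmid a (√(a * b)) b ha0.le hb0.le (Real.sq_sqrt (by positivity))
        have h5 := hmono.le_leftLim ha2
        rw [hgf _ (Real.sqrt_nonneg _)] at h3
        rw [hgf _ ha0.le] at h5
        rw [hgf _ hb0.le]
        calc Function.rightLim g x ^ 2 ≤ f √(a * b) ^ 2 :=
              pow_le_pow_left₀ (hL0.trans hLR) h3 2
          _ ≤ f a * f b := h4
          _ ≤ _ := mul_le_mul_of_nonneg_right h5 (hnonneg b hb0.le)
      by_contra! hlt
      nlinarith
  intro x hx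
  refine (hcont x hx).continuousWithinAt.congr (fun y hy => (hgf y hy).symm) (hgf x hx).symm

end EntrywisePreservers

section Coalescence

/-- Two blocks sharing two distinct vertices coincide. -/
lemma eq_of_shared_pair {κ V : Type*} [Finite V] {W : κ → Type*} (ι : ∀ i, W i ↪ V)
    (hglue : ∀ i j, i ≠ j → (range (ι i) ∩ range (ι j)).ncard ≤ 1) {i j : κ} {u v : V}
    (huv : u ≠ v) (hui : u ∈ range (ι i)) (hvi : v ∈ range (ι i)) (huj : u ∈ range (ι j))
    (hvj : v ∈ range (ι j)) : i = j := by
  by_contra hij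
  exact huv ((Set.ncard_le_one (toFinite _)).1 (hglue i j hij) u ⟨hui, huj⟩ v ⟨hvi, hvj⟩)

/-- Superadditivity on `[0, ∞)` for finite sums. -/
lemma sum_le_of_superadditive {κ : Type*} {f : ℝ → ℝ} (hf0 : f 0 = 0)
    (hsuper : ∀ x y, 0 ≤ x → 0 ≤ y → f x + f y ≤ f (x + y)) (s : Finset κ) {a : κ → ℝ}
    (ha : ∀ m, 0 ≤ a m) : ∑ m ∈ s, f (a m) ≤ f (∑ m ∈ s, a m) := by
  classical
  induction s using Finset.induction_on with
  | empty => simp [hf0]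
  | insert m s hm ih =>
    rw [Finset.sum_insert hm, Finset.sum_insert hm]
    have := hsuper (a m) (∑ m ∈ s, a m) (ha m) (Finset.sum_nonneg fun i _ => ha i)
    linarith

variable {κ : Type*} [Fintype κ] {W : κ → Type*} [∀ i, Fintype (W i)]
  {Gs : ∀ i, SimpleGraph (W i)} {V : Type*} [Fintype V] [DecidableEq V] {G : SimpleGraph V}
  {ι : ∀ i, W i ↪ V} {f : ℝ → ℝ}

/-- A superadditive preserver of every block preserves the whole coalescence. -/
lemma posSemidef_map_of_coalescence [DecidableEq κ] [Nonempty κ]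
    (hne : ∀ i, Nonempty (W i))
    (hcover : ∀ v : V, ∃ i x, ι i x = v)
    (hadj : ∀ u v : V, G.Adj u v ↔ ∃ i x y, (Gs i).Adj x y ∧ ι i x = u ∧ ι i y = v)
    (hglue : ∀ i j, i ≠ j → (range (ι i) ∩ range (ι j)).ncard ≤ 1) (hG : G.Connected)
    (hcard : Fintype.card V + Fintype.card κ = ∑ i, Fintype.card (W i) + 1) (hf0 : f 0 = 0)
    (hf : ∀ i, ∀ M ∈ PsetG (Gs i) univ, (M.map f).PosSemidef)
    (hsuper : ∀ x y, 0 ≤ x → 0 ≤ y → f x + f y ≤ f (x + y))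
    {A : Matrix V V ℝ} (hA : A ∈ PsetG G univ) : (A.map f).PosSemidef := by
  obtain ⟨hApos, -, hApat⟩ := hA
  have hdec : DecomposesOver (fun i => Finset.univ.map (ι i)) Finset.univ := by
    refine decomposesOver_univ_of_card_eq hG _ (fun i => ?_) (fun v => ?_) (fun u v huv => ?_) ?_
    · simp
    · simpa using hcover v
    · obtain ⟨i, x, y, -, rfl, rfl⟩ := (hadj u v).1 huv
      exact ⟨i, by simp, by simp⟩
    · simpa using hcard
  obtain ⟨B, hBpos, hBsupp, hsum⟩ := hdec A hApos <| by
    intro u v huv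
    by_cases h : u = v
    · subst h
      obtain ⟨i, x, rfl⟩ := hcover u
      exact ⟨i, by simp, by simp, by simp⟩
    · obtain ⟨i, x, y, -, rfl, rfl⟩ := (hadj u v).1 (not_imp_comm.1 (hApat u v h) huv)
      exact ⟨i, by simp, by simp, by simp⟩
  simp only [Finset.mem_univ, true_implies, Finset.mem_map, true_and] at hBpos hBsupp
  have happly : ∀ u v, A u v = ∑ m, B m u v := fun u v => by
    rw [hsum, Matrix.sum_apply]
  have hother : ∀ i j u v, u ≠ v → u ∈ range (ι i) → v ∈ range (ι i) → j ≠ i → B j u v = 0 := by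
    intro i j u v huv hu hv hji
    by_contra hne
    obtain ⟨hu', hv'⟩ := hBsupp j u v hne
    exact hji (eq_of_shared_pair ι hglue huv hu' hv' hu hv)
  have hoff : ∀ i u v, u ≠ v → u ∈ range (ι i) → v ∈ range (ι i) → B i u v = A u v := by
    intro i u v huv hu hv
    rw [happly, Finset.sum_eq_single i (fun j _ hji => hother i j u v huv hu hv hji) (by simp)]
  have hBf : ∀ i, ((B i).map f).PosSemidef := by
    intro i
    refine PosSemidef.of_submatrix_of_support (ι i) ?_ fun u v huv => hBsupp i u v fun h => ?_
    · refine hf i ((B i).submatrix (ι i) (ι i))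
        ⟨(hBpos i).submatrix _, fun _ _ => mem_univ _, fun x y hxy hnadj => ?_⟩
      have hxy' : ι i x ≠ ι i y := fun h => hxy ((ι i).injective h)
      rw [submatrix_apply, hoff i _ _ hxy' (mem_range_self x) (mem_range_self y)]
      refine hApat _ _ hxy' fun h => hnadj ?_
      obtain ⟨j, x', y', hadj', hx', hy'⟩ := (hadj _ _).1 h
      obtain rfl : i = j := eq_of_shared_pair ι hglue hxy' (mem_range_self x) (mem_range_self y)
        ⟨x', hx'⟩ ⟨y', hy'⟩
      rwa [(ι i).injective hx', (ι i).injective hy'] at hadj'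
    · simp [h, hf0] at huv
  have hmap : A.map f = ∑ i, (B i).map f +
      diagonal fun u => f (A u u) - ∑ i, f (B i u u) := by
    ext u v
    rw [Matrix.add_apply, Matrix.sum_apply]
    simp only [map_apply]
    by_cases huv : u = v
    · subst huv
      simp
    · rw [diagonal_apply_ne _ huv, add_zero]
      by_cases h : ∃ i, u ∈ range (ι i) ∧ v ∈ range (ι i)
      · obtain ⟨i, hu, hv⟩ := h
        rw [Finset.sum_eq_single i (fun j _ hji => by rw [hother i j u v huv hu hv hji, hf0])
          (by simp), hoff i u v huv hu hv]
      · have h0 : ∀ i, B i u v = 0 := fun i =>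
          not_imp_comm.1 (hBsupp i u v) fun h' => h ⟨i, h'⟩
        simp [happly, h0, hf0]
  rw [hmap]
  refine (posSemidef_sum _ fun i _ => hBf i).add (PosSemidef.diagonal fun u => ?_)
  rw [Pi.zero_apply, happly]
  exact sub_nonneg.2 (sum_le_of_superadditive hf0 hsuper _ fun i => (hBpos i).diag_nonneg)

/-- A coalescence of at least two connected graphs with edges contains a path on three
vertices. -/
lemma exists_path_three_of_coalescence [Nontrivial κ] (hconn : ∀ i, (Gs i).Connected)
    (hedge : ∀ i, ∃ x y, (Gs i).Adj x y)
    (hadj : ∀ u v : V, G.Adj u v ↔ ∃ i x y, (Gs i).Adj x y ∧ ι i x = u ∧ ι i y = v)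
    (hglue : ∀ i j, i ≠ j → (range (ι i) ∩ range (ι j)).ncard ≤ 1) (hG : G.Connected) :
    ∃ a b c, a ≠ c ∧ G.Adj a b ∧ G.Adj b c := by
  have hnbr : ∀ i x, ∃ y, (Gs i).Adj x y := by
    intro i x
    obtain ⟨y, z, hyz⟩ := hedge i
    have : Nontrivial (W i) := ⟨y, z, hyz.ne⟩
    exact (hconn i).preconnected.exists_adj_of_nontrivial x
  obtain ⟨i, j₀, hij₀⟩ := exists_pair_ne κ
  obtain ⟨j, hj, v, hv⟩ := hG.exists_block_inter_nonempty
    (fun i => Finset.univ.map (ι i)) (S := {i}) (fun m => by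
      obtain ⟨x, -⟩ := hedge m
      exact ⟨ι m x, by simp⟩) (fun u v huv => by
      obtain ⟨i, x, y, -, rfl, rfl⟩ := (hadj u v).1 huv
      exact ⟨i, by simp, by simp⟩) (by simp) (fun h => hij₀ (by
      have : j₀ ∈ ({i} : Finset κ) := h ▸ Finset.mem_univ _
      exact (Finset.mem_singleton.1 this).symm))
  simp only [Finset.singleton_biUnion, Finset.mem_inter, Finset.mem_map, Finset.mem_univ,
    true_and] at hv
  obtain ⟨⟨y, hy⟩, x, hx⟩ := hv
  obtain ⟨x', hxx'⟩ := hnbr i x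
  obtain ⟨y', hyy'⟩ := hnbr j y
  have h1 : G.Adj (ι i x') v := (hadj _ _).2 ⟨i, x', x, hxx'.symm, rfl, hx⟩
  have h2 : G.Adj v (ι j y') := (hadj _ _).2 ⟨j, y, y', hyy', hy, rfl⟩
  refine ⟨_, v, _, fun h => hj ?_, h1, h2⟩
  rw [Finset.mem_singleton]
  exact (eq_of_shared_pair ι hglue h1.ne (mem_range_self _) ⟨x, hx⟩ ⟨y', h.symm⟩ ⟨y, hy⟩).symm

/-- The characterization of entrywise preservers of a coalescence. -/
lemma coalescence_preserver_iff [DecidableEq κ] [Nontrivial κ] (hconn : ∀ i, (Gs i).Connected)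
    (hedge : ∀ i, ∃ x y, (Gs i).Adj x y) (hcover : ∀ v : V, ∃ i x, ι i x = v)
    (hadj : ∀ u v : V, G.Adj u v ↔ ∃ i x y, (Gs i).Adj x y ∧ ι i x = u ∧ ι i y = v)
    (hglue : ∀ i j, i ≠ j → (range (ι i) ∩ range (ι j)).ncard ≤ 1) (hG : G.Connected)
    (hcard : Fintype.card V + Fintype.card κ = ∑ i, Fintype.card (W i) + 1) (hf0 : f 0 = 0) :
    (∀ M ∈ PsetG G univ, (M.map f).PosSemidef) ↔
      ((∀ i, ∀ M ∈ PsetG (Gs i) univ, (M.map f).PosSemidef) ∧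
       ContinuousOn f (Ici (0 : ℝ)) ∧
       ∀ x y : ℝ, 0 ≤ x → 0 ≤ y → f x + f y ≤ f (x + y)) := by
  constructor
  · intro hf
    obtain ⟨a, b, c, hac, hab, hbc⟩ :=
      exists_path_three_of_coalescence hconn hedge hadj hglue hG
    obtain ⟨hnonneg, hsuper, hmid⟩ := preserver_of_path_three hf0 hf hac hab hbc
    refine ⟨fun i M hM => posSemidef_map_of_pattern_embeds hf (ι i) hM.1 fun x y hxy hne => ?_,
      continuousOn_Ici_of_superadditive_of_mulMidconvex hnonneg hsuper hmid, hsuper⟩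
    exact (hadj _ _).2 ⟨i, x, y, not_imp_comm.1 (hM.2.2 x y hxy) hne, rfl, rfl⟩
  · rintro ⟨hf, -, hsuper⟩ M hM
    exact posSemidef_map_of_coalescence (fun i => (hconn i).nonempty) hcover hadj hglue hG hcard
      hf0 hf hsuper hM

end Coalescence

/-- For functions vanishing at zero, entrywise application never leaves the pattern of `G`. -/
lemma map_mem_PsetG_iff {V : Type*} [Fintype V] {G : SimpleGraph V} {f : ℝ → ℝ}
    (hf0 : f 0 = 0) :
    (∀ M ∈ PsetG G univ, M.map f ∈ PsetG G univ) ↔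
      ∀ M ∈ PsetG G univ, (M.map f).PosSemidef :=
  forall₂_congr fun M hM => ⟨fun h => h.1, fun h => ⟨h, fun _ _ => mem_univ _,
    fun i j hij hadj => by rw [map_apply, hM.2.2 i j hij hadj, hf0]⟩⟩

/-- A function agreeing with `x ↦ x ^ α` on `(0, ∞)` and vanishing at `0` is continuous and
superadditive on `[0, ∞)` exactly when `1 ≤ α`. -/
lemma continuousOn_and_superadditive_iff_one_le {f : ℝ → ℝ} {α : ℝ} (hf0 : f 0 = 0)
    (hf : ∀ x, 0 < x → f x = x ^ α) :
    (ContinuousOn f (Ici (0 : ℝ)) ∧ ∀ x y : ℝ, 0 ≤ x → 0 ≤ y → f x + f y ≤ f (x + y)) ↔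
      1 ≤ α := by
  constructor
  · rintro ⟨-, h⟩
    have h1 := h 1 1 zero_le_one zero_le_one
    rw [hf 1 one_pos, hf _ (by norm_num), Real.one_rpow, one_add_one_eq_two] at h1
    by_contra! hα
    have := Real.rpow_lt_rpow_of_exponent_lt (one_lt_two (α := ℝ)) hα
    rw [Real.rpow_one] at this
    linarith
  · intro hα
    have hα0 : 0 < α := by linarith
    have hpow : ∀ x, 0 ≤ x → f x = x ^ α := fun x hx => by
      rcases hx.eq_or_lt with rfl | hx
      · rw [hf0, Real.zero_rpow hα0.ne']
      · exact hf x hx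
    refine ⟨(Real.continuous_rpow_const hα0.le).continuousOn.congr hpow, fun x y hx hy => ?_⟩
    rw [hpow x hx, hpow y hy, hpow _ (add_nonneg hx hy)]
    exact Real.add_rpow_le_rpow_add hx hy hα

lemma psiF_zero (α : ℝ) : psiF α 0 = 0 := by simp [psiF]

lemma phiF_zero (α : ℝ) : phiF α 0 = 0 := by simp [phiF]

lemma psiF_of_pos (α : ℝ) {x : ℝ} (hx : 0 < x) : psiF α x = x ^ α := by
  simp [psiF, Real.sign_of_pos hx, abs_of_pos hx]

lemma phiF_of_pos (α : ℝ) {x : ℝ} (hx : 0 < x) : phiF α x = x ^ α := by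
  simp [phiF, hx.ne', abs_of_pos hx]

/-- **Proposition 4.11 (coalescences)**: let `G` be a coalescence of connected graphs
`G_1, …, G_k` (`k > 1`), each with at least one edge: `G` is covered by embedded copies of the
`G_i` whose edges are exactly the edges of `G`, any two copies share at most one vertex, `G`
is connected, and `|V(G)| = Σ|V(G_i)| − (k−1)` (so the copies are glued in a tree-like
fashion at single vertices). For `f : ℝ → ℝ` with `f(0) = 0`, `f[−]` preserves positivity on
`P_G(ℝ)` iff it does so on each `P_{G_i}(ℝ)` and `f` is continuous and super-additive on
`[0,∞)`. In particular `H_G^ψ = [1,∞) ∩ ⋂ᵢ H_{G_i}^ψ` and `H_G^φ = [1,∞) ∩ ⋂ᵢ H_{G_i}^φ`. -/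
theorem coalescence_preserves_positivity_iff {k : ℕ} (hk : 1 < k)
    {W : Fin k → Type} [∀ i, Fintype (W i)] [∀ i, DecidableEq (W i)]
    (Gs : ∀ i, SimpleGraph (W i))
    (hconn : ∀ i, (Gs i).Connected) (hedge : ∀ i, ∃ x y, (Gs i).Adj x y)
    {V : Type} [Fintype V] [DecidableEq V] (G : SimpleGraph V)
    (ι : ∀ i, W i ↪ V)
    (hcover : ∀ v : V, ∃ i x, ι i x = v)
    (hadj : ∀ u v : V, G.Adj u v ↔ ∃ i x y, (Gs i).Adj x y ∧ ι i x = u ∧ ι i y = v)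
    (hglue : ∀ i j, i ≠ j → (Set.range (ι i) ∩ Set.range (ι j)).ncard ≤ 1)
    (hGconn : G.Connected)
    (hcard : Fintype.card V + (k - 1) = ∑ i, Fintype.card (W i))
    (f : ℝ → ℝ) (hf0 : f 0 = 0) :
    ((∀ M ∈ PsetG G univ, (M.map f).PosSemidef) ↔
      ((∀ i, ∀ M ∈ PsetG (Gs i) univ, (M.map f).PosSemidef) ∧
       ContinuousOn f (Ici (0 : ℝ)) ∧
       ∀ x y : ℝ, 0 ≤ x → 0 ≤ y → f x + f y ≤ f (x + y))) ∧
    (HsetPsi G = Ici (1 : ℝ) ∩ ⋂ i, HsetPsi (Gs i)) ∧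
    (HsetPhi G = Ici (1 : ℝ) ∩ ⋂ i, HsetPhi (Gs i)) := by
  have : Nontrivial (Fin k) := Fin.nontrivial_iff_two_le.2 hk
  have hcard' : Fintype.card V + Fintype.card (Fin k) = ∑ i, Fintype.card (W i) + 1 := by
    rw [Fintype.card_fin, ← hcard]
    omega
  have key : ∀ g : ℝ → ℝ, g 0 = 0 → _ := fun g hg0 =>
    coalescence_preserver_iff (f := g) hconn hedge hcover hadj hglue hGconn hcard' hg0
  refine ⟨key f hf0, ?_, ?_⟩
  · ext α
    have h0 := psiF_zero α
    simp only [HsetPsi, mem_ofPred_eq, mem_inter_iff, mem_iInter, mem_Ici, map_mem_PsetG_iff h0,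
      key _ h0, continuousOn_and_superadditive_iff_one_le h0 fun x => psiF_of_pos α]
    exact and_comm
  · ext α
    have h0 := phiF_zero α
    simp only [HsetPhi, mem_ofPred_eq, mem_inter_iff, mem_iInter, mem_Ici, map_mem_PsetG_iff h0,
      key _ h0, continuousOn_and_superadditive_iff_one_le h0 fun x => phiF_of_pos α]
    exact and_comm
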